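/- Fix r ≥ 0 and consider the upper-model random simplicial complex Y in Δ_n with probability parameters p_σ = p_i for dim σ = i ≤ r and p_σ = 0 for dim σ > r, where p_0, …, p_r ∈ [0,1] and q_i = 1 − p_i. Then for every ℓ with 0 ≤ ℓ ≤ r, the expectation of the number f_ℓ(Y) of ℓ-dimensional simplices of Y with respect to the upper measure equals E(f_ℓ) = C(n+1, ℓ+1) · (1 − ∏_{i=ℓ}^{r} q_i^{C(n−ℓ, i−ℓ)}), where C(a,b) denotes the binomial coefficient. -/

import Mathlib

open Finset

/-- The full simplex `Δₙ`: all nonempty subsets of `[n] = {0,…,n}`. -/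
def simplexAll (n : ℕ) : Finset (Finset (Fin (n+1))) :=
  Finset.univ.filter fun σ => σ.Nonempty

/-- The boundary `∂Δₙ`: all nonempty proper subsets of `[n]`. -/
def bdry (n : ℕ) : Finset (Finset (Fin (n+1))) :=
  Finset.univ.filter fun σ => σ.Nonempty ∧ σ ≠ Finset.univ

/-- A hypergraph is a simplicial complex if it is closed under passing to
nonempty subsets. -/
def IsComplex {n : ℕ} (X : Finset (Finset (Fin (n+1)))) : Prop :=
  ∀ σ ∈ X, ∀ τ : Finset (Fin (n+1)), τ ⊆ σ → τ.Nonempty → τ ∈ X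

instance {n : ℕ} (X : Finset (Finset (Fin (n+1)))) : Decidable (IsComplex X) :=
  inferInstanceAs (Decidable (∀ σ ∈ X, ∀ τ : Finset (Fin (n+1)), τ ⊆ σ → τ.Nonempty → τ ∈ X))

/-- The dual hypergraph `c(X) = {σ̂ : σ ∈ ∂Δₙ, σ ∉ X}`, where `σ̂ = [n] \ σ`. -/
def dual {n : ℕ} (X : Finset (Finset (Fin (n+1)))) : Finset (Finset (Fin (n+1))) :=
  (bdry n \ X).image fun σ => σᶜ

/-- `X̄`: the smallest simplicial complex containing the hypergraph `X`. -/
def clUp {n : ℕ} (X : Finset (Finset (Fin (n+1)))) : Finset (Finset (Fin (n+1))) :=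
  Finset.univ.filter fun τ => τ.Nonempty ∧ ∃ σ ∈ X, τ ⊆ σ

/-- `X̲`: the largest simplicial complex contained in the hypergraph `X`. -/
def clLow {n : ℕ} (X : Finset (Finset (Fin (n+1)))) : Finset (Finset (Fin (n+1))) :=
  Finset.univ.filter fun τ => τ.Nonempty ∧ ∀ σ : Finset (Fin (n+1)), σ ⊆ τ → σ.Nonempty → σ ∈ X

/-- The Bernoulli measure with parameters `p` on hypergraphs contained in the
ambient set `S` of simplices: `P(X) = ∏_{σ∈X} p σ · ∏_{σ∈S\X} (1 - p σ)`. -/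
def bern {n : ℕ} (S : Finset (Finset (Fin (n+1)))) (p : Finset (Fin (n+1)) → ℝ)
    (X : Finset (Finset (Fin (n+1)))) : ℝ :=
  (∏ σ ∈ X, p σ) * ∏ σ ∈ S \ X, (1 - p σ)

/-- The upper measure: `P̄(Y) = Σ_{X ⊆ S, X̄ = Y} P(X)`. -/
def upperP {n : ℕ} (S : Finset (Finset (Fin (n+1)))) (p : Finset (Fin (n+1)) → ℝ)
    (Y : Finset (Finset (Fin (n+1)))) : ℝ :=
  ∑ X ∈ S.powerset.filter (fun X => clUp X = Y), bern S p X

/-- The lower measure: `P̲(Y) = Σ_{X ⊆ S, X̲ = Y} P(X)`. -/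
def lowerP {n : ℕ} (S : Finset (Finset (Fin (n+1)))) (p : Finset (Fin (n+1)) → ℝ)
    (Y : Finset (Finset (Fin (n+1)))) : ℝ :=
  ∑ X ∈ S.powerset.filter (fun X => clLow X = Y), bern S p X

/-- External simplices of `Y` relative to the ambient set `S`: simplices
`σ ∈ S` with `σ ∉ Y` but every nonempty proper subset of `σ` in `Y`. -/
def extSimp {n : ℕ} (S Y : Finset (Finset (Fin (n+1)))) : Finset (Finset (Fin (n+1))) :=
  S.filter fun σ => σ ∉ Y ∧ ∀ τ : Finset (Fin (n+1)), τ ⊂ σ → τ.Nonempty → τ ∈ Y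

/-- Maximal simplices of `Y`: simplices of `Y` not properly contained in another
simplex of `Y`. -/
def maxSimp {n : ℕ} (Y : Finset (Finset (Fin (n+1)))) : Finset (Finset (Fin (n+1))) :=
  Y.filter fun σ => ∀ τ ∈ Y, σ ⊆ τ → σ = τ

/-!
A simplex `τ` belongs to `X̄` unless `X` avoids every simplex containing `τ`, so by independence
`P̄(τ ∈ Y) = 1 - ∏_{σ ⊇ τ} q_σ`. If `dim τ = ℓ`, then exactly `C(n-ℓ, i-ℓ)` of these `σ` have
dimension `i`, and linearity of expectation sums this over the `C(n+1, ℓ+1)` choices of `τ`.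
-/

section Bernoulli

variable {ι R : Type*} [DecidableEq ι] [CommRing R] {s t : Finset ι}

lemma sum_powerset_prod_mul_prod_one_sub (hts : t ⊆ s) (p : ι → R) :
    ∑ u ∈ t.powerset, (∏ i ∈ u, p i) * ∏ i ∈ s \ u, (1 - p i) = ∏ i ∈ s \ t, (1 - p i) := by
  have factor (u) (hu : u ∈ t.powerset) : (∏ i ∈ u, p i) * ∏ i ∈ s \ u, (1 - p i) =
      (∏ i ∈ s \ t, (1 - p i)) * ((∏ i ∈ u, p i) * ∏ i ∈ t \ u, (1 - p i)) := by
    have disj : Disjoint (s \ t) (t \ u) := disjoint_sdiff_self_left.mono_right sdiff_subset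
    rw [← sdiff_union_sdiff_cancel hts (mem_powerset.mp hu), prod_union disj, mul_left_comm]
  rw [sum_congr rfl factor, ← mul_sum, ← prod_add]
  simp only [add_sub_cancel, prod_const_one, mul_one]

end Bernoulli

section Products

variable {M : Type*} [CommMonoid M]

lemma prod_Icc_apply_card {α : Type*} [DecidableEq α] {s t : Finset α} (hst : s ⊆ t) (f : ℕ → M) :
    ∏ u ∈ Icc s t, f #u = ∏ k ∈ Icc #s #t, f k ^ (#t - #s).choose (k - #s) := by
  have card_mem (u) (hu : u ∈ Icc s t) : #u ∈ Icc #s #t :=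
    mem_Icc.mpr ((mem_Icc.mp hu).imp card_le_card card_le_card)
  rw [← prod_fiberwise_of_maps_to' card_mem]
  refine prod_congr rfl fun k hk ↦ ?_
  rw [prod_const, Icc_eq_filter_powerset, filter_comm, ← powersetCard_eq_filter,
    card_filter_powersetCard_subset s t k hst (mem_Icc.mp hk).1]

lemma prod_Icc_ite_pow_choose {ℓ n : ℕ} (hℓ : ℓ ≤ n) (r : ℕ) (f : ℕ → M) :
    ∏ i ∈ Icc ℓ n, (if i ≤ r then f i else 1) ^ (n - ℓ).choose (i - ℓ) =
      ∏ i ∈ Icc ℓ r, f i ^ (n - ℓ).choose (i - ℓ) := by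
  simp only [ite_pow, one_pow, ← prod_filter]
  refine prod_subset (fun i hi ↦ ?_) fun i hi hi' ↦ ?_
  · simp only [mem_filter, mem_Icc] at hi ⊢
    exact ⟨hi.1.1, hi.2⟩
  · simp only [mem_filter, mem_Icc] at hi hi'
    rw [Nat.choose_eq_zero_of_lt (by lia), pow_zero]

end Products

section UpperModel

variable {n : ℕ} {S X Y : Finset (Finset (Fin (n + 1)))} {τ : Finset (Fin (n + 1))}

lemma mem_simplexAll : τ ∈ simplexAll n ↔ τ.Nonempty := by
  simp only [simplexAll, mem_filter_univ]

lemma mem_clUp : τ ∈ clUp X ↔ τ.Nonempty ∧ ∃ σ ∈ X, τ ⊆ σ := by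
  simp only [clUp, mem_filter_univ]

lemma empty_notMem_simplexAll : ∅ ∉ simplexAll n :=
  fun h ↦ not_nonempty_empty (mem_simplexAll.mp h)

lemma isComplex_simplexAll : IsComplex (simplexAll n) :=
  fun _ _ _ _ hτ ↦ mem_simplexAll.mpr hτ

lemma isComplex_clUp : IsComplex (clUp X) := by
  intro σ hσ τ hτσ hτ
  obtain ⟨-, ρ, hρ, hσρ⟩ := mem_clUp.mp hσ
  exact mem_clUp.mpr ⟨hτ, ρ, hρ, hτσ.trans hσρ⟩

lemma clUp_subset (hY : IsComplex Y) (hXY : X ⊆ Y) : clUp X ⊆ Y := by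
  intro τ hτ
  obtain ⟨hne, σ, hσ, hτσ⟩ := mem_clUp.mp hτ
  exact hY σ (hXY hσ) τ hτσ hne

section Bern

variable (p : Finset (Fin (n + 1)) → ℝ)

lemma sum_bern : ∑ X ∈ S.powerset, bern S p X = 1 := by
  simp only [bern, sum_powerset_prod_mul_prod_one_sub (Subset.refl S) p, Finset.sdiff_self,
    prod_empty]

lemma sum_bern_filter_notMem_clUp (hτ : τ.Nonempty) :
    ∑ X ∈ S.powerset with τ ∉ clUp X, bern S p X = ∏ σ ∈ S with τ ⊆ σ, (1 - p σ) := by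
  have powerset_eq : {X ∈ S.powerset | τ ∉ clUp X} = (S \ {σ ∈ S | τ ⊆ σ}).powerset := by
    ext X
    simp only [mem_filter, mem_powerset, mem_clUp, hτ, true_and]
    grind
  have sdiff_eq : S \ (S \ {σ ∈ S | τ ⊆ σ}) = {σ ∈ S | τ ⊆ σ} :=
    Finset.sdiff_sdiff_eq_self (filter_subset _ S)
  simp only [powerset_eq, bern, sum_powerset_prod_mul_prod_one_sub sdiff_subset p, sdiff_eq]

lemma sum_bern_filter_mem_clUp (hτ : τ.Nonempty) :
    ∑ X ∈ S.powerset with τ ∈ clUp X, bern S p X = 1 - ∏ σ ∈ S with τ ⊆ σ, (1 - p σ) := by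
  rw [← sum_bern_filter_notMem_clUp p hτ, eq_sub_iff_add_eq, sum_filter_add_sum_filter_not,
    sum_bern]

lemma sum_mul_upperP (hS : IsComplex S) (g : Finset (Finset (Fin (n + 1))) → ℝ) :
    ∑ Y ∈ S.powerset with IsComplex Y, g Y * upperP S p Y =
      ∑ X ∈ S.powerset, g (clUp X) * bern S p X := by
  have clUp_mem (X) (hX : X ∈ S.powerset) : clUp X ∈ {Y ∈ S.powerset | IsComplex Y} :=
    mem_filter.mpr ⟨mem_powerset.mpr (clUp_subset hS (mem_powerset.mp hX)), isComplex_clUp⟩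
  rw [← sum_fiberwise_of_maps_to clUp_mem]
  refine sum_congr rfl fun Y _ ↦ ?_
  rw [upperP, mul_sum]
  refine sum_congr rfl fun X hX ↦ ?_
  rw [(mem_filter.mp hX).2]

lemma sum_card_filter_mul_upperP (hS : IsComplex S) (hS' : ∅ ∉ S)
    (P : Finset (Fin (n + 1)) → Prop) [DecidablePred P] :
    ∑ Y ∈ S.powerset with IsComplex Y, (#{τ ∈ Y | P τ} : ℝ) * upperP S p Y =
      ∑ τ ∈ S with P τ, (1 - ∏ σ ∈ S with τ ⊆ σ, (1 - p σ)) := by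
  have filter_clUp (X) (hX : X ∈ S.powerset) :
      {τ ∈ clUp X | P τ} = {τ ∈ {τ ∈ S | P τ} | τ ∈ clUp X} := by
    rw [filter_comm, filter_mem_eq_inter, inter_eq_right.mpr (clUp_subset hS (mem_powerset.mp hX))]
  calc
    _ = ∑ X ∈ S.powerset, (#{τ ∈ clUp X | P τ} : ℝ) * bern S p X :=
      sum_mul_upperP p hS fun Y ↦ (#{τ ∈ Y | P τ} : ℝ)
    _ = ∑ X ∈ S.powerset, ∑ τ ∈ {τ ∈ S | P τ} with τ ∈ clUp X, bern S p X :=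
      sum_congr rfl fun X hX ↦ by rw [sum_const, nsmul_eq_mul, filter_clUp X hX]
    _ = ∑ τ ∈ S with P τ, ∑ X ∈ S.powerset with τ ∈ clUp X, bern S p X :=
      sum_sum_bipartiteAbove_eq_sum_sum_bipartiteBelow (fun X τ ↦ τ ∈ clUp X) _
    _ = _ := sum_congr rfl fun τ hτ ↦ sum_bern_filter_mem_clUp p <|
      nonempty_iff_ne_empty.mpr (ne_of_mem_of_not_mem (mem_filter.mp hτ).1 hS')

end Bern

lemma filter_superset_simplexAll (hτ : τ.Nonempty) :
    {σ ∈ simplexAll n | τ ⊆ σ} = Icc τ univ := by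
  ext σ
  simp only [mem_filter, mem_simplexAll, mem_Icc, subset_univ, and_true,
    and_iff_right_iff_imp]
  exact hτ.mono

lemma filter_card_simplexAll (ℓ : ℕ) :
    {σ ∈ simplexAll n | #σ = ℓ + 1} = powersetCard (ℓ + 1) univ := by
  ext σ
  simp only [mem_filter, mem_simplexAll, mem_powersetCard_univ, and_iff_right_iff_imp]
  exact fun hσ ↦ card_pos.mp (hσ ▸ ℓ.succ_pos)

lemma prod_one_sub_filter_superset_simplexAll (r : ℕ) (p : ℕ → ℝ) {ℓ : ℕ} (hτ : #τ = ℓ + 1) :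
    ∏ σ ∈ simplexAll n with τ ⊆ σ, (1 - if #σ ≤ r + 1 then p (#σ - 1) else 0) =
      ∏ i ∈ Icc ℓ r, (1 - p i) ^ (n - ℓ).choose (i - ℓ) := by
  have hne : τ.Nonempty := card_pos.mp (hτ ▸ ℓ.succ_pos)
  have hℓ : ℓ ≤ n := by
    have := card_finset_fin_le τ
    lia
  rw [filter_superset_simplexAll hne,
    prod_Icc_apply_card (subset_univ τ) fun k ↦ 1 - if k ≤ r + 1 then p (k - 1) else 0,
    hτ, card_fin, ← map_add_right_Icc, prod_map, ← prod_Icc_ite_pow_choose hℓ]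
  refine prod_congr rfl fun i _ ↦ ?_
  simp only [addRightEmbedding_apply, Nat.add_sub_add_right, add_le_add_iff_right,
    Nat.add_sub_cancel, sub_ite, sub_zero]

end UpperModel

theorem expected_face_numbers_general (n r : ℕ) (p : ℕ → ℝ) (ℓ : ℕ) :
    ∑ Y ∈ (simplexAll n).powerset with IsComplex Y,
      (#{σ ∈ Y | #σ = ℓ + 1} : ℝ) *
        upperP (simplexAll n) (fun σ ↦ if #σ ≤ r + 1 then p (#σ - 1) else 0) Y =
      ((n + 1).choose (ℓ + 1) : ℝ) *
        (1 - ∏ i ∈ Icc ℓ r, (1 - p i) ^ (n - ℓ).choose (i - ℓ)) := by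
  rw [sum_card_filter_mul_upperP _ isComplex_simplexAll empty_notMem_simplexAll,
    filter_card_simplexAll]
  calc
    _ = ∑ _τ ∈ powersetCard (ℓ + 1) (univ : Finset (Fin (n + 1))),
          (1 - ∏ i ∈ Icc ℓ r, (1 - p i) ^ (n - ℓ).choose (i - ℓ)) :=
      sum_congr rfl fun τ hτ ↦ congrArg (1 - ·) <|
        prod_one_sub_filter_superset_simplexAll r p (mem_powersetCard.mp hτ).2
    _ = _ := by rw [sum_const, card_powersetCard, card_fin, nsmul_eq_mul]

/-- Expected face numbers in the upper model with dimension-dependent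
parameters `p_i` (for dimensions `i ≤ r`) and `0` above dimension `r`:
`E(f_ℓ) = C(n+1,ℓ+1)·(1 - ∏_{i=ℓ}^{r} q_i^{C(n-ℓ,i-ℓ)})`. -/
theorem expected_face_numbers (n r : ℕ) (hn : 1 ≤ n) (p : ℕ → ℝ)
    (hp : ∀ i ≤ r, 0 ≤ p i ∧ p i ≤ 1) (ℓ : ℕ) (hl : ℓ ≤ r) :
    ∑ Y ∈ (simplexAll n).powerset.filter (fun Y => IsComplex Y),
      ((Y.filter (fun σ => σ.card = ℓ+1)).card : ℝ) *
        upperP (simplexAll n)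
          (fun σ => if σ.card ≤ r+1 then p (σ.card - 1) else 0) Y
    = ((n+1).choose (ℓ+1) : ℝ) *
        (1 - ∏ i ∈ Finset.Icc ℓ r, (1 - p i) ^ ((n-ℓ).choose (i-ℓ))) := by
  exact expected_face_numbers_general n r p ℓ
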